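/- Bayesian log-odds update from a verifying retraction (equation for retractions with log(α) = 0): in the truth-or-noise model, for every realization (σ₁,…,σ_t) ∈ {−1,1}^t and every τ ∈ {1,…,t}, ℓ( P(θ = 1 | s₁ = σ₁,…,s_t = σ_t, n_τ = 1) ) = ℓ( P(θ = 1 | s₁ = σ₁,…,s_t = σ_t) ) − σ_τ · log( q/(1−q) ), where q = 1 − ν/2. That is, a retraction of observation τ subtracts from the log-odds exactly the log-likelihood contribution of the retracted observation. -/

import Mathlib

/-!
Conditionally on `θ = b`, the pairs `(n_j, ε_j)` are independent, so an event that constrains each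
pair separately has a joint probability with `θ = b` that factors over the periods
(`sum_indicator_fiber`), and the posterior log-odds is the logarithm of the ratio of the two
products `likelihood`, one for each state (`logit_condProb`). The event that all observations equal
`σ` has factor `q` or `1 - q` in period `j`, according to whether `σ_j` agrees with the state
(`sum_obs`). Adding the retraction `n_τ = 1` changes only the factor of period `τ`, which becomes
`ν / 2` for both states (`sum_obs_noise`). The likelihood ratio therefore loses exactly the factor
of period `τ`, which is `(q / (1 - q)) ^ σ_τ`.
-/

open scoped BigOperators

/-- Sample space of the truth-or-noise model with `t` observations:
a state bit `θ` together with, for each period, a noise indicator bit `n_j`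
and a noise-value bit `ε_j`. -/
abbrev Omega (t : ℕ) := Bool × (Fin t → Bool × Bool)

/-- Encode a bit as a sign in `{-1, 1}`. -/
def toSign (x : Bool) : ℤ := if x then 1 else -1

/-- Atom weight of the product PMF realizing the truth-or-noise model:
`θ` is uniform on `{-1,1}`, the noise indicators `n_j` are i.i.d. Bernoulli(ν),
the noise values `ε_j` are i.i.d. uniform on `{-1,1}`, all mutually
independent. -/
noncomputable def weight {t : ℕ} (ν : ℝ) (ω : Omega t) : ℝ :=
  (1 / 2) * ∏ j : Fin t, ((if (ω.2 j).1 then ν else 1 - ν) * (1 / 2))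

/-- Probability of an event in the truth-or-noise model. -/
noncomputable def prob {t : ℕ} (ν : ℝ) (A : Set (Omega t)) : ℝ :=
  ∑ ω : Omega t, Set.indicator A (weight ν) ω

/-- Conditional probability `P(A | B)` in the truth-or-noise model. -/
noncomputable def condProb {t : ℕ} (ν : ℝ) (A B : Set (Omega t)) : ℝ :=
  prob ν (A ∩ B) / prob ν B

/-- The state `θ ∈ {-1, 1}`. -/
def stateVal {t : ℕ} (ω : Omega t) : ℤ := toSign ω.1

/-- The noise indicator `n_j` (`true` means observation `j` is noise). -/
def noiseVal {t : ℕ} (j : Fin t) (ω : Omega t) : Bool := (ω.2 j).1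

/-- The observation `s_j = (1 - n_j)·θ + n_j·ε_j ∈ {-1, 1}`. -/
def obsVal {t : ℕ} (j : Fin t) (ω : Omega t) : ℤ :=
  if (ω.2 j).1 then toSign (ω.2 j).2 else toSign ω.1

/-- Log-odds (logit) function `ℓ(p) = log (p / (1 - p))`. -/
noncomputable def logit (p : ℝ) : ℝ := Real.log (p / (1 - p))

/-- The weight of one period's pair `(n_j, ε_j)`. -/
noncomputable def pairWeight (ν : ℝ) (x : Bool × Bool) : ℝ :=
  (if x.1 then ν else 1 - ν) * (1 / 2)

open Classical in
/-- The conditional probability, given the state bit `b`, that the pair `(n_j, ε_j)` of every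
period `j` satisfies `Q b j`. -/
noncomputable def likelihood {t : ℕ} (ν : ℝ) (Q : Bool → Fin t → Bool × Bool → Prop)
    (b : Bool) : ℝ :=
  ∏ j : Fin t, ∑ x : Bool × Bool, if Q b j x then pairWeight ν x else 0

/-- Joint probability of the state bit `b` and a coordinatewise event: independence across periods
turns the sum over noise sequences into a product. -/
lemma sum_indicator_fiber {t : ℕ} (ν : ℝ) (Q : Bool → Fin t → Bool × Bool → Prop) (b : Bool) :
    ∑ f : Fin t → Bool × Bool,
        Set.indicator {ω : Omega t | ∀ j, Q ω.1 j (ω.2 j)} (weight ν) (b, f)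
      = 1 / 2 * likelihood ν Q b := by
  classical
  unfold likelihood
  rw [Finset.prod_univ_sum, Fintype.piFinset_univ, Finset.mul_sum]
  refine Finset.sum_congr rfl fun f _ => ?_
  by_cases h : ∀ j, Q b j (f j)
  · rw [Set.indicator_of_mem (by exact h)]
    simp [weight, pairWeight, h]
  · rw [Set.indicator_of_notMem (by exact h)]
    obtain ⟨j, hj⟩ := not_forall.mp h
    rw [Finset.prod_eq_zero (Finset.mem_univ j) (by simp [hj]), mul_zero]

/-- Posterior log-odds of the state given a coordinatewise event is the log-likelihood ratio, the
prior being uniform. -/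
lemma logit_condProb {t : ℕ} (ν : ℝ) (Q : Bool → Fin t → Bool × Bool → Prop)
    (hT : 0 < likelihood ν Q true) (hF : 0 < likelihood ν Q false) :
    logit (condProb ν {ω : Omega t | stateVal ω = 1} {ω : Omega t | ∀ j, Q ω.1 j (ω.2 j)})
      = Real.log (likelihood ν Q true / likelihood ν Q false) := by
  have hB : prob ν {ω : Omega t | ∀ j, Q ω.1 j (ω.2 j)}
      = 1 / 2 * likelihood ν Q true + 1 / 2 * likelihood ν Q false := by
    rw [prob, Fintype.sum_prod_type, Fintype.sum_bool, sum_indicator_fiber, sum_indicator_fiber]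
  have hA : prob ν ({ω : Omega t | stateVal ω = 1} ∩ {ω : Omega t | ∀ j, Q ω.1 j (ω.2 j)})
      = 1 / 2 * likelihood ν Q true := by
    rw [prob, Fintype.sum_prod_type, Fintype.sum_bool, ← sum_indicator_fiber]
    classical
    simp only [Set.indicator_apply, Set.mem_inter_iff, Set.mem_ofPred_eq, stateVal, toSign]
    simp
  rw [logit, condProb, hA, hB]
  congr 1
  have h : 1 / 2 * likelihood ν Q true + 1 / 2 * likelihood ν Q false ≠ 0 := by positivity
  rw [one_sub_div h, div_div_div_cancel_right₀ h, add_sub_cancel_left,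
    mul_div_mul_left _ _ (by norm_num)]

/-- The observation produced by the state bit `b` and the pair `x = (n_j, ε_j)`. -/
def obsOf (b : Bool) (x : Bool × Bool) : ℤ := if x.1 then toSign x.2 else toSign b

open Classical in
lemma sum_obs (ν : ℝ) (b : Bool) {s : ℤ} (hs : s = 1 ∨ s = -1) :
    (∑ x : Bool × Bool, if obsOf b x = s then pairWeight ν x else 0)
      = if toSign b = s then 1 - ν / 2 else ν / 2 := by
  rcases hs with rfl | rfl <;> cases b <;>
    simp [Fintype.sum_prod_type, obsOf, pairWeight, toSign] <;> ring

open Classical in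
lemma sum_obs_noise (ν : ℝ) (b : Bool) {s : ℤ} (hs : s = 1 ∨ s = -1) :
    (∑ x : Bool × Bool, if obsOf b x = s ∧ x.1 = true then pairWeight ν x else 0) = ν / 2 := by
  rcases hs with rfl | rfl <;> cases b <;>
    simp [Fintype.sum_prod_type, obsOf, pairWeight, toSign] <;> ring

/-- **Bayesian log-odds update from a verifying retraction** (equation for
retractions with `log α = 0`). In the truth-or-noise model, for every
realization `(σ₁,…,σ_t) ∈ {−1,1}^t` and every `τ ∈ {1,…,t}`,
`ℓ(P(θ = 1 | s₁ = σ₁,…,s_t = σ_t, n_τ = 1))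
  = ℓ(P(θ = 1 | s₁ = σ₁,…,s_t = σ_t)) − σ_τ·log(q/(1−q))`, where `q = 1 − ν/2`:
a retraction of observation `τ` subtracts from the log-odds exactly the
log-likelihood contribution of the retracted observation. -/
theorem bayesian_logodds_update_retraction
    (t : ℕ) (ν : ℝ) (hν : ν ∈ Set.Ioo (0:ℝ) 1)
    (σ : Fin t → ℤ) (hσ : ∀ j, σ j = 1 ∨ σ j = -1) (τ : Fin t) :
    logit (condProb ν {ω : Omega t | stateVal ω = 1}
        ({ω : Omega t | ∀ j : Fin t, obsVal j ω = σ j}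
          ∩ {ω : Omega t | noiseVal τ ω = true}))
      = logit (condProb ν {ω : Omega t | stateVal ω = 1}
          {ω : Omega t | ∀ j : Fin t, obsVal j ω = σ j})
        - (σ τ : ℝ) * Real.log ((1 - ν / 2) / (1 - (1 - ν / 2))) := by
  classical
  obtain ⟨h0, h1⟩ := hν
  set Q : Bool → Fin t → Bool × Bool → Prop := fun b j x => obsOf b x = σ j with hQ
  set R : Bool → Fin t → Bool × Bool → Prop :=
    fun b j x => obsOf b x = σ j ∧ (j = τ → x.1 = true) with hR
  set c : Bool → Fin t → ℝ := fun b j => if toSign b = σ j then 1 - ν / 2 else ν / 2 with hc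
  have cpos : ∀ b j, 0 < c b j := fun b j => by
    simp only [hc]; split_ifs <;> linarith
  have hLQ : ∀ b, likelihood ν Q b = c b τ * ∏ j ∈ Finset.univ.erase τ, c b j := fun b => by
    rw [Finset.mul_prod_erase _ _ (Finset.mem_univ τ), likelihood]
    refine Finset.prod_congr rfl fun j _ => ?_
    convert sum_obs ν b (hσ j)
  have hLR : ∀ b, likelihood ν R b = ν / 2 * ∏ j ∈ Finset.univ.erase τ, c b j := fun b => by
    rw [likelihood, ← Finset.mul_prod_erase _ _ (Finset.mem_univ τ)]
    congr 1
    · rw [← sum_obs_noise ν b (hσ τ)]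
      simp [hR]
    · refine Finset.prod_congr rfl fun j hj => ?_
      have hj' := Finset.ne_of_mem_erase hj
      simp only [hc]
      rw [← sum_obs ν b (hσ j)]
      simp [hR, hj']
  have hP : ∀ b, 0 < ∏ j ∈ Finset.univ.erase τ, c b j :=
    fun b => Finset.prod_pos fun j _ => cpos b j
  have hQpos : ∀ b, 0 < likelihood ν Q b := fun b => by
    rw [hLQ]; exact mul_pos (cpos b τ) (hP b)
  have hRpos : ∀ b, 0 < likelihood ν R b := fun b => by
    rw [hLR]; exact mul_pos (by linarith) (hP b)
  have hset : ({ω : Omega t | ∀ j : Fin t, obsVal j ω = σ j}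
      ∩ {ω : Omega t | noiseVal τ ω = true}) = {ω : Omega t | ∀ j, R ω.1 j (ω.2 j)} := by
    ext ω
    simp [hR, obsOf, obsVal, noiseVal, forall_and]
  have hset' : {ω : Omega t | ∀ j : Fin t, obsVal j ω = σ j}
      = {ω : Omega t | ∀ j, Q ω.1 j (ω.2 j)} := rfl
  -- The factor of period `τ` contributes `log ((q / (1 - q)) ^ σ_τ)`.
  have hτ : Real.log (c true τ / c false τ)
      = (σ τ : ℝ) * Real.log ((1 - ν / 2) / (1 - (1 - ν / 2))) := by
    rw [sub_sub_cancel]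
    rcases hσ τ with h | h
    · simp [hc, h, toSign]
    · have : c true τ / c false τ = ((1 - ν / 2) / (ν / 2))⁻¹ := by
        simp [hc, h, toSign]
      rw [this, Real.log_inv, h]
      push_cast
      ring
  rw [hset, hset', logit_condProb ν R (hRpos _) (hRpos _),
    logit_condProb ν Q (hQpos _) (hQpos _), hLR, hLR, hLQ, hLQ,
    mul_div_mul_left _ _ (by positivity), mul_div_mul_comm,
    Real.log_mul (div_pos (cpos _ _) (cpos _ _)).ne' (div_pos (hP _) (hP _)).ne']
  rw [hτ]
  ring
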